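/- Let m be a positive integer, let A, B : ℝ^m → (m×m real matrices) be twice continuously differentiable, and let u : ℝ² × ℝ → ℝ^m be twice continuously differentiable on a neighbourhood of (x̄,ȳ,t_n) and satisfy ∂_t u + A(u) ∂_x u + B(u) ∂_y u = 0 there. For each τ ∈ (0,τ₀] let v_τ be a twice continuously differentiable solution of the constant-coefficient system ∂_t v + Ã_τ ∂_x v + B̃_τ ∂_y v = 0 with Ã_τ = A(u(x̄,ȳ,t_n+τ/2)), B̃_τ = B(u(x̄,ȳ,t_n+τ/2)) and v_τ(x,y,t_n) = u(x,y,t_n) on a neighbourhood of (x̄,ȳ). Then ∂_tt v_τ(x̄,ȳ,t_n) = [ A(u)A(u) ∂_xx u + A(u)B(u) ∂_y∂_x u + B(u)A(u) ∂_x∂_y u + B(u)B(u) ∂_yy u ]|_{(x̄,ȳ,t_n)} + O(τ) as τ → 0⁺; that is, there exist C > 0 and τ₁ ∈ (0,τ₀] such that for all τ ∈ (0,τ₁] the norm of the difference of the two sides is at most C τ. -/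

import Mathlib

/-!
Fix `τ` and write `a`, `b` for the frozen coefficient matrices. Differentiating the
constant-coefficient equation `∂ₜv = -(a ∂ₓv + b ∂_yv)` in `t`, exchanging derivatives (`v` is `C²`)
and substituting the equation once more gives the exact identity
`∂ₜₜv = a a ∂ₓₓv + a b ∂_y∂ₓv + b a ∂ₓ∂_yv + b b ∂_yyv` (`pdt_pdt_of_linear_system`).

At time `tₙ` the functions `v` and `u` agree on a spatial neighbourhood, hence so do their spatial
derivatives of first order, and then those of second order (`slice_congr` used twice). So the second
derivatives of `v` may be replaced by those of `u`, which do not depend on `τ`.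

What remains depends on `τ` only through `a = A(u(x̄,ȳ,tₙ+τ/2))` and `b = B(u(x̄,ȳ,tₙ+τ/2))`.
It is a differentiable function of `τ` at `0`, so it differs from its value at `0` by `O(τ)`.
-/


/-- Partial derivative in the `x`-direction of a function of `(x, y, t) : ℝ × ℝ × ℝ`. -/
noncomputable def pdx {E : Type*} [NormedAddCommGroup E] [NormedSpace ℝ E]
    (f : ℝ × ℝ × ℝ → E) (z : ℝ × ℝ × ℝ) : E := fderiv ℝ f z ((1:ℝ), (0:ℝ), (0:ℝ))

/-- Partial derivative in the `y`-direction. -/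
noncomputable def pdy {E : Type*} [NormedAddCommGroup E] [NormedSpace ℝ E]
    (f : ℝ × ℝ × ℝ → E) (z : ℝ × ℝ × ℝ) : E := fderiv ℝ f z ((0:ℝ), (1:ℝ), (0:ℝ))

/-- Partial derivative in the `t`-direction. -/
noncomputable def pdt {E : Type*} [NormedAddCommGroup E] [NormedSpace ℝ E]
    (f : ℝ × ℝ × ℝ → E) (z : ℝ × ℝ × ℝ) : E := fderiv ℝ f z ((0:ℝ), (0:ℝ), (1:ℝ))

/-- Matrix–vector multiplication for an `m × m` matrix given as `Fin m → Fin m → ℝ`. -/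
def mvec {m : ℕ} (M : Fin m → Fin m → ℝ) (x : Fin m → ℝ) : Fin m → ℝ :=
  fun i => ∑ j, M i j * x j

open Filter Topology

/-- `mvec M` as a continuous linear map. -/
noncomputable def mvecL {m : ℕ} (M : Fin m → Fin m → ℝ) : (Fin m → ℝ) →L[ℝ] (Fin m → ℝ) :=
  LinearMap.toContinuousLinearMap (Matrix.mulVecLin (Matrix.of M))

lemma mvecL_apply {m : ℕ} (M : Fin m → Fin m → ℝ) (x : Fin m → ℝ) : mvecL M x = mvec M x := rfl

lemma fderiv_neg_mvec_add {m : ℕ} (a b : Fin m → Fin m → ℝ) {f g : ℝ × ℝ × ℝ → (Fin m → ℝ)}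
    {z : ℝ × ℝ × ℝ} (hf : DifferentiableAt ℝ f z) (hg : DifferentiableAt ℝ g z)
    (w : ℝ × ℝ × ℝ) :
    fderiv ℝ (fun z => -(mvec a (f z) + mvec b (g z))) z w
      = -(mvec a (fderiv ℝ f z w) + mvec b (fderiv ℝ g z w)) := by
  have h := ((((mvecL a).hasFDerivAt (x := f z)).comp z hf.hasFDerivAt).add
    (((mvecL b).hasFDerivAt (x := g z)).comp z hg.hasFDerivAt)).neg
  have h2 : HasFDerivAt (fun z => -(mvec a (f z) + mvec b (g z))) _ z := h
  rw [h2.fderiv]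
  simp [mvecL_apply]

lemma differentiableAt_fderiv_apply {E F : Type*} [NormedAddCommGroup E] [NormedSpace ℝ E]
    [NormedAddCommGroup F] [NormedSpace ℝ F] {f : E → F} {z : E} (hf : ContDiffAt ℝ 2 f z) (v : E) :
    DifferentiableAt ℝ (fun z => fderiv ℝ f z v) z := by
  have h : ContDiffAt ℝ 1 (fderiv ℝ f) z := hf.fderiv_right (by norm_num)
  exact (h.differentiableAt (by norm_num)).clm_apply (differentiableAt_const v)

lemma fderiv_fderiv_comm {E F : Type*} [NormedAddCommGroup E] [NormedSpace ℝ E]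
    [NormedAddCommGroup F] [NormedSpace ℝ F] {f : E → F} {z : E} (hf : ContDiffAt ℝ 2 f z)
    (v w : E) :
    fderiv ℝ (fun z => fderiv ℝ f z v) z w = fderiv ℝ (fun z => fderiv ℝ f z w) z v := by
  have h : ContDiffAt ℝ 1 (fderiv ℝ f) z := hf.fderiv_right (by norm_num)
  have hd := h.differentiableAt (by norm_num)
  have key : ∀ p q : E, fderiv ℝ (fun z => fderiv ℝ f z p) z q
      = fderiv ℝ (fderiv ℝ f) z q p := by
    intro p q
    rw [fderiv_clm_apply hd (differentiableAt_const p)]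
    simp
  rw [key, key]
  exact (hf.isSymmSndFDerivAt (by simp)) w v

/-- A `C²` solution of a constant-coefficient first-order system satisfies the second-order
equation `∂ₜₜv = (a ∂ₓ + b ∂_y)²v`. -/
lemma pdt_pdt_of_linear_system {m : ℕ} (a b : Fin m → Fin m → ℝ) {v : ℝ × ℝ × ℝ → (Fin m → ℝ)}
    {z : ℝ × ℝ × ℝ} (hv : ContDiffAt ℝ 2 v z)
    (hpde : ∀ᶠ z in 𝓝 z, pdt v z + mvec a (pdx v z) + mvec b (pdy v z) = 0) :
    pdt (pdt v) z = mvec a (mvec a (pdx (pdx v) z)) + mvec a (mvec b (pdy (pdx v) z))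
      + mvec b (mvec a (pdx (pdy v) z)) + mvec b (mvec b (pdy (pdy v) z)) := by
  have hx : DifferentiableAt ℝ (pdx v) z := differentiableAt_fderiv_apply hv _
  have hy : DifferentiableAt ℝ (pdy v) z := differentiableAt_fderiv_apply hv _
  have he : pdt v =ᶠ[𝓝 z] fun z => -(mvec a (pdx v z) + mvec b (pdy v z)) := by
    filter_upwards [hpde] with z hz
    rw [add_assoc] at hz
    exact eq_neg_of_add_eq_zero_left hz
  have hD : ∀ w, fderiv ℝ (pdt v) z w
      = -(mvec a (fderiv ℝ (pdx v) z w) + mvec b (fderiv ℝ (pdy v) z w)) := by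
    intro w
    rw [he.fderiv_eq, fderiv_neg_mvec_add a b hx hy]
  have hxt : pdt (pdx v) z = pdx (pdt v) z := fderiv_fderiv_comm hv _ _
  have hyt : pdt (pdy v) z = pdy (pdt v) z := fderiv_fderiv_comm hv _ _
  have hxy : pdy (pdx v) z = pdx (pdy v) z := fderiv_fderiv_comm hv _ _
  have h1 : pdt (pdt v) z = -(mvec a (pdt (pdx v) z) + mvec b (pdt (pdy v) z)) := hD _
  have h2 : pdx (pdt v) z = -(mvec a (pdx (pdx v) z) + mvec b (pdx (pdy v) z)) := hD _
  have h3 : pdy (pdt v) z = -(mvec a (pdy (pdx v) z) + mvec b (pdy (pdy v) z)) := hD _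
  rw [h1, hxt, hyt, h2, h3, hxy]
  simp only [← mvecL_apply, map_neg, map_add]
  abel

/-- Spatial derivatives at time `t` are determined by the values on the time slice `t`. -/
lemma slice_congr {F : Type*} [NormedAddCommGroup F] [NormedSpace ℝ F]
    {f g : ℝ × ℝ × ℝ → F} {t : ℝ} {p : ℝ × ℝ}
    (hf : DifferentiableAt ℝ f (p.1, p.2, t)) (hg : DifferentiableAt ℝ g (p.1, p.2, t))
    (h : ∀ᶠ q : ℝ × ℝ in 𝓝 p, f (q.1, q.2, t) = g (q.1, q.2, t)) :
    pdx f (p.1, p.2, t) = pdx g (p.1, p.2, t) ∧ pdy f (p.1, p.2, t) = pdy g (p.1, p.2, t) := by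
  have hι : HasFDerivAt (fun q : ℝ × ℝ => ((q.1, q.2, t) : ℝ × ℝ × ℝ))
      ((ContinuousLinearMap.fst ℝ ℝ ℝ).prod ((ContinuousLinearMap.snd ℝ ℝ ℝ).prod 0)) p :=
    hasFDerivAt_fst.prodMk (hasFDerivAt_snd.prodMk (hasFDerivAt_const t p))
  have hf' := HasFDerivAt.comp p (f := fun q : ℝ × ℝ => ((q.1, q.2, t) : ℝ × ℝ × ℝ))
    hf.hasFDerivAt hι
  have hg' := HasFDerivAt.comp p (f := fun q : ℝ × ℝ => ((q.1, q.2, t) : ℝ × ℝ × ℝ))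
    hg.hasFDerivAt hι
  have hE := hf'.unique (hg'.congr_of_eventuallyEq h)
  constructor
  · simpa [pdx] using DFunLike.congr_fun hE ((1 : ℝ), (0 : ℝ))
  · simpa [pdy] using DFunLike.congr_fun hE ((0 : ℝ), (1 : ℝ))

lemma slice_congr_second {F : Type*} [NormedAddCommGroup F] [NormedSpace ℝ F]
    {f g : ℝ × ℝ × ℝ → F} {x y t : ℝ}
    (hf : ContDiffAt ℝ 2 f (x, y, t)) (hg : ContDiffAt ℝ 2 g (x, y, t))
    (h : ∀ᶠ q : ℝ × ℝ in 𝓝 (x, y), f (q.1, q.2, t) = g (q.1, q.2, t)) :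
    pdx (pdx f) (x, y, t) = pdx (pdx g) (x, y, t) ∧ pdy (pdx f) (x, y, t) = pdy (pdx g) (x, y, t) ∧
    pdx (pdy f) (x, y, t) = pdx (pdy g) (x, y, t) ∧
    pdy (pdy f) (x, y, t) = pdy (pdy g) (x, y, t) := by
  have hc : Tendsto (fun q : ℝ × ℝ => ((q.1, q.2, t) : ℝ × ℝ × ℝ)) (𝓝 (x, y)) (𝓝 (x, y, t)) :=
    Continuous.tendsto (by fun_prop) _
  have hfe := hc.eventually (hf.eventually (by simp))
  have hge := hc.eventually (hg.eventually (by simp))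
  have h1 : ∀ᶠ q : ℝ × ℝ in 𝓝 (x, y), pdx f (q.1, q.2, t) = pdx g (q.1, q.2, t) ∧
      pdy f (q.1, q.2, t) = pdy g (q.1, q.2, t) := by
    filter_upwards [hfe, hge, h.eventually_nhds] with q hq1 hq2 hq3
    exact slice_congr (hq1.differentiableAt (by norm_num)) (hq2.differentiableAt (by norm_num)) hq3
  have hX := slice_congr (p := (x, y)) (t := t) (f := pdx f) (g := pdx g)
    (differentiableAt_fderiv_apply hf _) (differentiableAt_fderiv_apply hg _)
    (h1.mono fun _ h => h.1)
  have hY := slice_congr (p := (x, y)) (t := t) (f := pdy f) (g := pdy g)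
    (differentiableAt_fderiv_apply hf _) (differentiableAt_fderiv_apply hg _)
    (h1.mono fun _ h => h.2)
  exact ⟨hX.1, hX.2, hY.1, hY.2⟩

lemma DifferentiableAt.mvec {m : ℕ} {M : ℝ → Fin m → Fin m → ℝ} {x : ℝ → Fin m → ℝ} {s : ℝ}
    (hM : DifferentiableAt ℝ M s) (hx : DifferentiableAt ℝ x s) :
    DifferentiableAt ℝ (fun r => _root_.mvec (M r) (x r)) s := by
  have hM' : ∀ i j, DifferentiableAt ℝ (fun r => M r i j) s := fun i j =>
    differentiableAt_pi.1 (differentiableAt_pi.1 hM i) j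
  have hx' := differentiableAt_pi.1 hx
  refine differentiableAt_pi.2 fun i => ?_
  exact DifferentiableAt.fun_sum fun j _ => (hM' i j).mul (hx' j)

/-- `∂ₜₜ v_τ(x̄,ȳ,tₙ) = [A(u)A(u) ∂ₓₓ u + A(u)B(u) ∂_y∂ₓ u + B(u)A(u) ∂ₓ∂_y u
+ B(u)B(u) ∂_yy u]|_{(x̄,ȳ,tₙ)} + O(τ)` for the solutions `v_τ` of the
constant-coefficient systems linearised about `u(x̄,ȳ,tₙ+τ/2)`. -/
theorem second_time_derivative_linearised_first_order
    (m : ℕ) (hm : 0 < m)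
    (A B : (Fin m → ℝ) → (Fin m → Fin m → ℝ))
    (hA : ContDiff ℝ 2 A) (hB : ContDiff ℝ 2 B)
    (u : ℝ × ℝ × ℝ → (Fin m → ℝ))
    (xb yb tn τ₀ : ℝ) (hτ₀ : 0 < τ₀)
    -- u is C² on a neighbourhood of (xb, yb, tn) and solves the quasilinear system there
    (Ω : Set (ℝ × ℝ × ℝ)) (hΩ : IsOpen Ω) (hz₀ : (xb, yb, tn) ∈ Ω)
    (hu : ContDiffOn ℝ 2 u Ω)
    (hupde : ∀ z ∈ Ω, pdt u z + mvec (A (u z)) (pdx u z) + mvec (B (u z)) (pdy u z) = 0)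
    -- the family v_τ of C² solutions of the constant-coefficient linearised systems
    (V : ℝ → ℝ × ℝ × ℝ → (Fin m → ℝ))
    (Ω' : Set (ℝ × ℝ × ℝ)) (hΩ' : IsOpen Ω') (hz₀' : (xb, yb, tn) ∈ Ω')
    (hV : ∀ τ ∈ Set.Ioc 0 τ₀, ContDiffOn ℝ 2 (V τ) Ω')
    (hVpde : ∀ τ ∈ Set.Ioc 0 τ₀, ∀ z ∈ Ω',
      pdt (V τ) z + mvec (A (u (xb, yb, tn + τ / 2))) (pdx (V τ) z)
        + mvec (B (u (xb, yb, tn + τ / 2))) (pdy (V τ) z) = 0)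
    -- v_τ agrees with u at time tn on a spatial neighbourhood of (xb, yb)
    (U : Set (ℝ × ℝ)) (hU : IsOpen U) (hxyU : (xb, yb) ∈ U)
    (hinit : ∀ τ ∈ Set.Ioc 0 τ₀, ∀ xy ∈ U, V τ (xy.1, xy.2, tn) = u (xy.1, xy.2, tn)) :
    ∃ C > (0:ℝ), ∃ τ₁ ∈ Set.Ioc 0 τ₀, ∀ τ ∈ Set.Ioc 0 τ₁,
      ‖pdt (pdt (V τ)) (xb, yb, tn) -
        (mvec (A (u (xb, yb, tn))) (mvec (A (u (xb, yb, tn))) (pdx (pdx u) (xb, yb, tn)))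
          + mvec (A (u (xb, yb, tn))) (mvec (B (u (xb, yb, tn))) (pdy (pdx u) (xb, yb, tn)))
          + mvec (B (u (xb, yb, tn))) (mvec (A (u (xb, yb, tn))) (pdx (pdy u) (xb, yb, tn)))
          + mvec (B (u (xb, yb, tn))) (mvec (B (u (xb, yb, tn))) (pdy (pdy u) (xb, yb, tn))))‖
        ≤ C * τ := by
  have hu0 : ContDiffAt ℝ 2 u (xb, yb, tn) := hu.contDiffAt (hΩ.mem_nhds hz₀)
  -- the right-hand side with the coefficients frozen at time `tn + τ / 2`
  let G : ℝ → (Fin m → ℝ) := fun τ =>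
    mvec (A (u (xb, yb, tn + τ / 2))) (mvec (A (u (xb, yb, tn + τ / 2)))
        (pdx (pdx u) (xb, yb, tn)))
      + mvec (A (u (xb, yb, tn + τ / 2))) (mvec (B (u (xb, yb, tn + τ / 2)))
        (pdy (pdx u) (xb, yb, tn)))
      + mvec (B (u (xb, yb, tn + τ / 2))) (mvec (A (u (xb, yb, tn + τ / 2)))
        (pdx (pdy u) (xb, yb, tn)))
      + mvec (B (u (xb, yb, tn + τ / 2))) (mvec (B (u (xb, yb, tn + τ / 2)))
        (pdy (pdy u) (xb, yb, tn)))
  have hVG : ∀ τ ∈ Set.Ioc 0 τ₀, pdt (pdt (V τ)) (xb, yb, tn) = G τ := by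
    intro τ hτ
    have hv0 : ContDiffAt ℝ 2 (V τ) (xb, yb, tn) := (hV τ hτ).contDiffAt (hΩ'.mem_nhds hz₀')
    obtain ⟨h1, h2, h3, h4⟩ := slice_congr_second hv0 hu0
      (Filter.mem_of_superset (hU.mem_nhds hxyU) (hinit τ hτ))
    rw [pdt_pdt_of_linear_system _ _ hv0
      (Filter.mem_of_superset (hΩ'.mem_nhds hz₀') (hVpde τ hτ)), h1, h2, h3, h4]
  have hpath : DifferentiableAt ℝ (fun τ : ℝ => u (xb, yb, tn + τ / 2)) 0 := by
    have hud : DifferentiableAt ℝ u ((fun τ : ℝ => ((xb, yb, tn + τ / 2) : ℝ × ℝ × ℝ)) 0) := by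
      simpa using hu0.differentiableAt (by norm_num)
    exact hud.comp (0 : ℝ) (by fun_prop)
  have hAd : DifferentiableAt ℝ (fun τ : ℝ => A (u (xb, yb, tn + τ / 2))) 0 :=
    (hA.differentiable (by norm_num) _).comp (0 : ℝ) hpath
  have hBd : DifferentiableAt ℝ (fun τ : ℝ => B (u (xb, yb, tn + τ / 2))) 0 :=
    (hB.differentiable (by norm_num) _).comp (0 : ℝ) hpath
  have hG : DifferentiableAt ℝ G 0 :=
    (((hAd.mvec (hAd.mvec (differentiableAt_const _))).add
      (hAd.mvec (hBd.mvec (differentiableAt_const _)))).add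
      (hBd.mvec (hAd.mvec (differentiableAt_const _)))).add
      (hBd.mvec (hBd.mvec (differentiableAt_const _)))
  obtain ⟨C, hC, hbound⟩ := hG.isBigO_sub.exists_pos
  obtain ⟨ε, hε, hball⟩ := Metric.eventually_nhds_iff.1 hbound.bound
  refine ⟨C, hC, min τ₀ (ε / 2), ⟨by positivity, min_le_left _ _⟩, fun τ hτ => ?_⟩
  have hτ1 : τ ≤ τ₀ := hτ.2.trans (min_le_left _ _)
  have hτ2 : τ ≤ ε / 2 := hτ.2.trans (min_le_right _ _)
  have hpos : 0 < τ := hτ.1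
  have h := hball (y := τ) (by rw [Real.dist_eq, sub_zero, abs_of_pos hpos]; linarith)
  rw [sub_zero, Real.norm_eq_abs, abs_of_pos hpos] at h
  rw [hVG τ ⟨hpos, hτ1⟩]
  simpa [G] using h
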